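/- (Analytic counterpart of Theorem 2.1 of the paper — the local p²-correspondence relations — with the proportionality constant ω made explicit.) Let g ≥ 1, let p be an odd positive integer, let n ≥ 1 be an integer coprime to p, and set N = 2np. Let Ω ∈ 𝔥_g and define a_w := θ_N[0,w](0, (1/N)Ω) and b_w := θ_N[0,w](0, (1/(p²N))Ω) for w ∈ ℤ^g. Then for all x, w ∈ ℤ^g: ∑_{t ∈ {0,1}^g} a_{x+(N/2)t} · a_{p·w+(N/2)t} = p^{−g} · ∑_{u ∈ {0,…,2p−1}^g} a_{x+pn·u} · b_{w+n·u}. (In the paper's notation, x plays the role of v, y = pw, the index set Z_{2p} is embedded in Z_{2np} by u ↦ nu, and b_w corresponds to the σ²-twisted theta null value a_w^{σ²}.) -/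

import Mathlib

open scoped BigOperators

/-- The `n`-th term of the series defining the theta function with rational
characteristics `θ_l[ε₁,ε₂](z,Ω)` (equation (1) of the paper). -/
noncomputable def thetaTerm (g l : ℕ) (ε₁ ε₂ : Fin g → ℤ) (z : Fin g → ℂ)
    (Ω : Matrix (Fin g) (Fin g) ℂ) (n : Fin g → ℤ) : ℂ :=
  Complex.exp (↑Real.pi * Complex.I *
      (∑ i, ∑ j, ((n i : ℂ) + (ε₁ i : ℂ) / (l : ℂ)) * Ω i j *
        ((n j : ℂ) + (ε₁ j : ℂ) / (l : ℂ)))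
    + 2 * ↑Real.pi * Complex.I *
      (∑ i, ((n i : ℂ) + (ε₁ i : ℂ) / (l : ℂ)) * (z i + (ε₂ i : ℂ) / (l : ℂ))))

/-- The theta function with rational characteristics `θ_l[ε₁,ε₂](z,Ω)`. -/
noncomputable def thetaChar (g l : ℕ) (ε₁ ε₂ : Fin g → ℤ) (z : Fin g → ℂ)
    (Ω : Matrix (Fin g) (Fin g) ℂ) : ℂ :=
  ∑' n : Fin g → ℤ, thetaTerm g l ε₁ ε₂ z Ω n

/-- `Ω` belongs to the Siegel upper half space `𝔥_g`: it is symmetric and its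
imaginary part is positive definite. -/
def IsSiegel {g : ℕ} (Ω : Matrix (Fin g) (Fin g) ℂ) : Prop :=
  Ω.IsSymm ∧ (Matrix.of fun i j => (Ω i j).im).PosDef

/-- The level-`N` theta null values `a_w := θ_N[0,w](0, Ω/N)`. -/
noncomputable def thetaNull (g N : ℕ) (Ω : Matrix (Fin g) (Fin g) ℂ)
    (w : Fin g → ℤ) : ℂ :=
  thetaChar g N 0 w 0 ((1 / (N : ℂ)) • Ω)

lemma quad_lower_bound {g : ℕ} (hg : 1 ≤ g) (Y : Matrix (Fin g) (Fin g) ℝ) (hY : Y.PosDef) :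
    ∃ c : ℝ, 0 < c ∧ ∀ v : Fin g → ℝ, c * ∑ i, v i ^ 2 ≤ ∑ i, ∑ j, v i * Y i j * v j := by
  have hne : Nonempty (Fin g) := ⟨⟨0, hg⟩⟩
  have hcont : Continuous (fun v : Fin g → ℝ => ∑ i, ∑ j, v i * Y i j * v j) := by fun_prop
  have hpos : ∀ v : Fin g → ℝ, v ≠ 0 → 0 < ∑ i, ∑ j, v i * Y i j * v j := by
    intro v hv
    have h := hY.dotProduct_mulVec_pos hv
    simpa [dotProduct, Matrix.mulVec, Finset.mul_sum, mul_assoc] using h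
  obtain ⟨v₀, hv₀, hmin⟩ := (isCompact_sphere (0 : Fin g → ℝ) 1).exists_isMinOn
    (NormedSpace.sphere_nonempty.mpr zero_le_one) hcont.continuousOn
  have hv₀ne : v₀ ≠ 0 := by
    rintro rfl
    simp at hv₀
  set q := ∑ i, ∑ j, v₀ i * Y i j * v₀ j with hq
  have hqpos : 0 < q := hpos v₀ hv₀ne
  have hg0 : (0 : ℝ) < g := by exact_mod_cast hg
  refine ⟨q / g, by positivity, fun v => ?_⟩
  by_cases hv : v = 0
  · subst hv; simp
  have hn : 0 < ‖v‖ := norm_pos_iff.mpr hv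
  have h1 : q ≤ ∑ i, ∑ j, (‖v‖⁻¹ • v) i * Y i j * (‖v‖⁻¹ • v) j := by
    have := hmin (a := ‖v‖⁻¹ • v) (by simp [norm_smul, hn.ne'])
    simpa using this
  have h2 : ∑ i, ∑ j, (‖v‖⁻¹ • v) i * Y i j * (‖v‖⁻¹ • v) j
      = (‖v‖⁻¹) ^ 2 * ∑ i, ∑ j, v i * Y i j * v j := by
    simp only [Finset.mul_sum, Pi.smul_apply, smul_eq_mul]
    refine Finset.sum_congr rfl fun i _ => Finset.sum_congr rfl fun j _ => by ring
  rw [h2] at h1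
  have h3 : ∑ i, v i ^ 2 ≤ g * ‖v‖ ^ 2 := by
    calc ∑ i, v i ^ 2 ≤ ∑ _i : Fin g, ‖v‖ ^ 2 := by
          refine Finset.sum_le_sum fun i _ => ?_
          rw [← sq_abs]
          have := norm_le_pi_norm v i
          rw [Real.norm_eq_abs] at this
          gcongr
      _ = g * ‖v‖ ^ 2 := by simp
  calc q / g * ∑ i, v i ^ 2 ≤ q / g * (g * ‖v‖ ^ 2) := by gcongr
    _ = q * ‖v‖ ^ 2 := by field_simp
    _ ≤ ((‖v‖⁻¹) ^ 2 * ∑ i, ∑ j, v i * Y i j * v j) * ‖v‖ ^ 2 := by gcongr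
    _ = _ := by field_simp

lemma summable_pi_prod (f : ℤ → ℝ) (hf0 : ∀ m, 0 ≤ f m) (hf : Summable f) (g : ℕ) :
    Summable (fun m : Fin g → ℤ => ∏ i, f (m i)) := by
  induction g with
  | zero => exact Summable.of_finite
  | succ k ih =>
    rw [← (Fin.consEquiv (fun _ : Fin (k + 1) => ℤ)).summable_iff]
    have := hf.mul_of_nonneg ih hf0 (fun m => Finset.prod_nonneg fun i _ => hf0 _)
    refine this.congr fun m => ?_
    simp [Fin.consEquiv, Fin.prod_univ_succ]

lemma summable_gauss (g : ℕ) (c : ℝ) (hc : 0 < c) :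
    Summable (fun m : Fin g → ℤ => Real.exp (-Real.pi * (c * ∑ i, (m i : ℝ) ^ 2))) := by
  have h1 := summable_pow_mul_jacobiTheta₂_term_bound 0 hc 0
  have h2 := summable_pi_prod (fun m : ℤ => Real.exp (-Real.pi * (c * (m : ℝ) ^ 2)))
    (fun m => (Real.exp_pos _).le) (by simpa using h1) g
  refine h2.congr fun m => ?_
  rw [← Real.exp_sum, Finset.mul_sum, Finset.mul_sum]

lemma thetaTerm_norm (g N : ℕ) (w : Fin g → ℤ) (Ω : Matrix (Fin g) (Fin g) ℂ) (r : ℝ)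
    (m : Fin g → ℤ) :
    ‖thetaTerm g N 0 w 0 ((r : ℂ) • Ω) m‖
      = Real.exp (-Real.pi * (r * ∑ i, ∑ j, (m i : ℝ) * (Ω i j).im * (m j : ℝ))) := by
  have e1 : (∑ i, ∑ j, ((m i : ℂ) + ((0 : Fin g → ℤ) i : ℂ) / (N : ℂ)) * ((r : ℂ) • Ω) i j *
        ((m j : ℂ) + ((0 : Fin g → ℤ) j : ℂ) / (N : ℂ))).im
        = r * ∑ i, ∑ j, (m i : ℝ) * (Ω i j).im * (m j : ℝ) := by
    rw [Complex.im_sum, Finset.mul_sum]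
    refine Finset.sum_congr rfl fun i _ => ?_
    rw [Complex.im_sum, Finset.mul_sum]
    refine Finset.sum_congr rfl fun j _ => ?_
    simp
    ring
  have e2 : (∑ i, ((m i : ℂ) + ((0 : Fin g → ℤ) i : ℂ) / (N : ℂ)) *
      ((0 : Fin g → ℂ) i + (w i : ℂ) / (N : ℂ)))
        = ((∑ i, (m i : ℝ) * ((w i : ℝ) / (N : ℝ)) : ℝ) : ℂ) := by
    push_cast
    simp
  rw [thetaTerm, Complex.norm_exp, e2, Complex.add_re]
  congr 1
  rw [← e1]
  generalize (∑ i, ∑ j, ((m i : ℂ) + ((0 : Fin g → ℤ) i : ℂ) / (N : ℂ)) * ((r : ℂ) • Ω) i j *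
        ((m j : ℂ) + ((0 : Fin g → ℤ) j : ℂ) / (N : ℂ))) = z
  generalize (∑ i, (m i : ℝ) * ((w i : ℝ) / (N : ℝ))) = y
  simp

lemma thetaTerm_summable {g : ℕ} (hg : 1 ≤ g) (N : ℕ) (w : Fin g → ℤ)
    (Ω : Matrix (Fin g) (Fin g) ℂ) (hΩ : IsSiegel Ω) (M : ℕ) (hM : 0 < M) :
    Summable (fun m => ‖thetaTerm g N 0 w 0 ((1 / (M : ℂ)) • Ω) m‖) := by
  obtain ⟨c, hc, hb⟩ := quad_lower_bound hg _ hΩ.2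
  have hM' : (0 : ℝ) < 1 / M := by positivity
  refine (summable_gauss g (1 / M * c) (by positivity)).of_nonneg_of_le
    (fun _ => norm_nonneg _) fun m => ?_
  have : (1 / (M : ℂ)) = ((1 / M : ℝ) : ℂ) := by push_cast; rfl
  rw [this, thetaTerm_norm]
  have h := hb (fun i => (m i : ℝ))
  simp only [Matrix.of_apply] at h
  rw [Real.exp_le_exp, neg_mul, neg_mul, neg_le_neg_iff, mul_assoc]
  gcongr

lemma char_sum_one (M : ℕ) (hM : 0 < M) (s : ℤ) :
    ∑ t : Fin M, Complex.exp (2 * Real.pi * Complex.I * ((s : ℂ) * ((t : ℕ) : ℂ) / (M : ℂ)))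
      = if (M : ℤ) ∣ s then (M : ℂ) else 0 := by
  have hM0 : (M : ℂ) ≠ 0 := by exact_mod_cast hM.ne'
  set ζ := Complex.exp (2 * Real.pi * Complex.I * ((s : ℂ) / M)) with hζ
  have h1 : ∀ t : ℕ, Complex.exp (2 * Real.pi * Complex.I * ((s : ℂ) * (t : ℂ) / (M : ℂ)))
      = ζ ^ t := by
    intro t
    rw [hζ, ← Complex.exp_nat_mul]
    congr 1
    ring
  simp only [h1]
  rw [Fin.sum_univ_eq_sum_range (fun t => ζ ^ t) M]
  have h2 : ζ = 1 ↔ (M : ℤ) ∣ s := by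
    rw [hζ, Complex.exp_eq_one_iff]
    constructor
    · rintro ⟨k, hk⟩
      refine ⟨k, ?_⟩
      have hpi : (2 * Real.pi * Complex.I : ℂ) ≠ 0 := Complex.two_pi_I_ne_zero
      rw [mul_comm (k : ℂ)] at hk
      have := mul_left_cancel₀ hpi hk
      rw [div_eq_iff hM0] at this
      rw [mul_comm]
      exact_mod_cast this
    · rintro ⟨k, rfl⟩
      refine ⟨k, ?_⟩
      push_cast
      field_simp
  split_ifs with hd
  · rw [h2.mpr hd]; simp
  · have hne : ζ ≠ 1 := fun h => hd (h2.mp h)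
    have hp : ζ ^ M = 1 := by
      rw [← h1, mul_div_assoc, div_self hM0, mul_one, Complex.exp_eq_one_iff]
      exact ⟨s, by ring⟩
    rw [geom_sum_eq hne, hp]; simp

lemma char_sum (g M : ℕ) (hM : 0 < M) (s : Fin g → ℤ) :
    ∑ t : Fin g → Fin M,
        ∏ i, Complex.exp (2 * Real.pi * Complex.I * ((s i : ℂ) * ((t i : ℕ) : ℂ) / (M : ℂ)))
      = if ∀ i, (M : ℤ) ∣ s i then (M : ℂ) ^ g else 0 := by
  rw [← Fintype.prod_sum (fun i (t : Fin M) =>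
    Complex.exp (2 * Real.pi * Complex.I * ((s i : ℂ) * ((t : ℕ) : ℂ) / (M : ℂ))))]
  simp only [char_sum_one M hM]
  split_ifs with h
  · rw [Finset.prod_congr rfl (fun i _ => if_pos (h i))]; simp
  · push Not at h
    obtain ⟨i, hi⟩ := h
    exact Finset.prod_eq_zero (Finset.mem_univ i) (if_neg hi)

lemma thetaTerm_shift (g N : ℕ) (w v : Fin g → ℤ) (Ω : Matrix (Fin g) (Fin g) ℂ)
    (m : Fin g → ℤ) :
    thetaTerm g N 0 (fun i => w i + v i) 0 Ω m = thetaTerm g N 0 w 0 Ω m *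
      ∏ i, Complex.exp (2 * Real.pi * Complex.I * ((m i : ℂ) * (v i : ℂ) / (N : ℂ))) := by
  rw [← Complex.exp_sum, thetaTerm, thetaTerm, ← Complex.exp_add, add_assoc]
  congr 2
  rw [← Finset.mul_sum, ← mul_add, ← Finset.sum_add_distrib]
  congr 1
  refine Finset.sum_congr rfl fun i _ => ?_
  simp
  ring

/-- Finite sum over shifts of a product of two theta values, evaluated by orthogonality. -/
lemma shift_sum {g : ℕ} (N : ℕ) (M h₁ h₂ c₁ c₂ : ℕ) (hN : 0 < N) (hM : 0 < M)
    (hh₁ : h₁ * M = c₁ * N) (hh₂ : h₂ * M = c₂ * N) (x y : Fin g → ℤ)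
    (Ω₁ Ω₂ : Matrix (Fin g) (Fin g) ℂ)
    (hs₁ : ∀ w, Summable (fun m => ‖thetaTerm g N 0 w 0 Ω₁ m‖))
    (hs₂ : ∀ w, Summable (fun m => ‖thetaTerm g N 0 w 0 Ω₂ m‖)) :
    ∑ t : Fin g → Fin M,
      thetaChar g N 0 (fun i => x i + (h₁ : ℤ) * ((t i : ℕ) : ℤ)) 0 Ω₁ *
      thetaChar g N 0 (fun i => y i + (h₂ : ℤ) * ((t i : ℕ) : ℤ)) 0 Ω₂
    = ∑' mk : (Fin g → ℤ) × (Fin g → ℤ),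
        if ∀ i, (M : ℤ) ∣ c₁ * mk.1 i + c₂ * mk.2 i then
          (M : ℂ) ^ g * (thetaTerm g N 0 x 0 Ω₁ mk.1 * thetaTerm g N 0 y 0 Ω₂ mk.2) else 0 := by
  have hM0 : (M : ℂ) ≠ 0 := by exact_mod_cast hM.ne'
  have hN0 : (N : ℂ) ≠ 0 := by exact_mod_cast hN.ne'
  have e₁ : (h₁ : ℂ) / N = c₁ / M := by
    rw [div_eq_div_iff hN0 hM0]; exact_mod_cast hh₁
  have e₂ : (h₂ : ℂ) / N = c₂ / M := by
    rw [div_eq_div_iff hN0 hM0]; exact_mod_cast hh₂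
  simp only [thetaChar]
  rw [Finset.sum_congr rfl (fun t _ => tsum_mul_tsum_of_summable_norm (hs₁ _) (hs₂ _))]
  rw [← Summable.tsum_finsetSum (fun t _ => summable_mul_of_summable_norm (hs₁ _) (hs₂ _))]
  refine tsum_congr fun mk => ?_
  have key := char_sum g M hM (fun i => c₁ * mk.1 i + c₂ * mk.2 i)
  have hif : (if ∀ i, (M : ℤ) ∣ c₁ * mk.1 i + c₂ * mk.2 i then
      (M : ℂ) ^ g * (thetaTerm g N 0 x 0 Ω₁ mk.1 * thetaTerm g N 0 y 0 Ω₂ mk.2) else 0)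
      = (thetaTerm g N 0 x 0 Ω₁ mk.1 * thetaTerm g N 0 y 0 Ω₂ mk.2) *
        (if ∀ i, (M : ℤ) ∣ c₁ * mk.1 i + c₂ * mk.2 i then (M : ℂ) ^ g else 0) := by
    split_ifs <;> ring
  rw [hif, ← key, Finset.mul_sum]
  refine Finset.sum_congr rfl fun t _ => ?_
  rw [thetaTerm_shift g N x, thetaTerm_shift g N y]
  rw [mul_mul_mul_comm, ← Finset.prod_mul_distrib]
  congr 1
  refine Finset.prod_congr rfl fun i _ => ?_
  rw [← Complex.exp_add]
  congr 1
  push_cast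
  have : ∀ a b c : ℂ, a * (b * c) / N = a * (b / N) * c := fun a b c => by ring
  rw [this, this, e₁, e₂]
  ring

/-- Rescaling the summation variable by `p`. -/
lemma thetaTerm_scale (g N K p : ℕ) (hp : 0 < p) (w : Fin g → ℤ) (Ω : Matrix (Fin g) (Fin g) ℂ)
    (k : Fin g → ℤ) :
    thetaTerm g N 0 w 0 ((1 / ((p ^ 2 * K : ℕ) : ℂ)) • Ω) (fun i => (p : ℤ) * k i)
      = thetaTerm g N 0 (fun i => (p : ℤ) * w i) 0 ((1 / (K : ℂ)) • Ω) k := by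
  have hp0 : (p : ℂ) ≠ 0 := by exact_mod_cast hp.ne'
  rw [thetaTerm, thetaTerm]
  congr 3
  · refine Finset.sum_congr rfl fun i _ => Finset.sum_congr rfl fun j _ => ?_
    simp
    field_simp
  · refine Finset.sum_congr rfl fun i _ => ?_
    simp
    ring

/-- analytic counterpart of Theorem 2.1 of the paper — the local
p²-correspondence relations — with the proportionality constant ω made
explicit.  Here `N = 2np`, `a_w = θ_N[0,w](0, Ω/N)` and
`b_w = θ_N[0,w](0, Ω/(p²N))` plays the role of `a_w^{σ²}`. -/
theorem local_p2_correspondence (g : ℕ) (hg : 1 ≤ g) (p n : ℕ)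
    (hp : Odd p) (hp0 : 0 < p) (hn : 1 ≤ n) (hco : Nat.Coprime n p)
    (Ω : Matrix (Fin g) (Fin g) ℂ) (hΩ : IsSiegel Ω) (x w : Fin g → ℤ) :
    ∑ t : Fin g → Fin 2,
      thetaNull g (2 * n * p) Ω
          (fun i => x i + ((n * p : ℕ) : ℤ) * ((t i : ℕ) : ℤ)) *
        thetaNull g (2 * n * p) Ω
          (fun i => (p : ℤ) * w i + ((n * p : ℕ) : ℤ) * ((t i : ℕ) : ℤ))
    = (p : ℂ) ^ (-(g : ℤ)) *
        ∑ u : Fin g → Fin (2 * p),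
          thetaNull g (2 * n * p) Ω
              (fun i => x i + ((p * n : ℕ) : ℤ) * ((u i : ℕ) : ℤ)) *
            thetaChar g (2 * n * p) 0
              (fun i => w i + ((n : ℕ) : ℤ) * ((u i : ℕ) : ℤ)) 0
              ((1 / ((p ^ 2 * (2 * n * p) : ℕ) : ℂ)) • Ω) := by
  have hN : 0 < 2 * n * p := by positivity
  have hs₁ : ∀ w, Summable (fun m => ‖thetaTerm g (2 * n * p) 0 w 0
      ((1 / ((2 * n * p : ℕ) : ℂ)) • Ω) m‖) :=
    fun w => thetaTerm_summable hg _ w Ω hΩ _ hN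
  have hs₂ : ∀ w, Summable (fun m => ‖thetaTerm g (2 * n * p) 0 w 0
      ((1 / ((p ^ 2 * (2 * n * p) : ℕ) : ℂ)) • Ω) m‖) :=
    fun w => thetaTerm_summable hg _ w Ω hΩ _ (by positivity)
  have hp0' : (p : ℂ) ≠ 0 := by exact_mod_cast hp0.ne'
  simp only [thetaNull]
  rw [shift_sum (2 * n * p) 2 (n * p) (n * p) 1 1 hN (by norm_num) (by ring) (by ring)
    x (fun i => (p : ℤ) * w i) _ _ hs₁ hs₁]
  rw [shift_sum (2 * n * p) (2 * p) (p * n) n p 1 hN (by positivity) (by ring) (by ring)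
    x w _ _ hs₁ hs₂]
  have hinj : Function.Injective (fun mk : (Fin g → ℤ) × (Fin g → ℤ) =>
      ((mk.1, fun i => (p : ℤ) * mk.2 i) : (Fin g → ℤ) × (Fin g → ℤ))) := by
    rintro ⟨m, k⟩ ⟨m', k'⟩ h
    simp only [Prod.mk.injEq] at h
    refine Prod.ext h.1 (funext fun i => ?_)
    have hz : (p : ℤ) ≠ 0 := by exact_mod_cast hp0.ne'
    exact mul_left_cancel₀ hz (congrFun h.2 i)
  have hsupp : Function.support (fun mk : (Fin g → ℤ) × (Fin g → ℤ) =>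
      if ∀ i, ((2 * p : ℕ) : ℤ) ∣ (p : ℕ) * mk.1 i + (1 : ℕ) * mk.2 i then
          ((2 * p : ℕ) : ℂ) ^ g * (thetaTerm g (2 * n * p) 0 x 0
            ((1 / ((2 * n * p : ℕ) : ℂ)) • Ω) mk.1 * thetaTerm g (2 * n * p) 0 w 0
            ((1 / ((p ^ 2 * (2 * n * p) : ℕ) : ℂ)) • Ω) mk.2) else 0) ⊆
      Set.range (fun mk : (Fin g → ℤ) × (Fin g → ℤ) =>
      ((mk.1, fun i => (p : ℤ) * mk.2 i) : (Fin g → ℤ) × (Fin g → ℤ))) := by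
    intro mk hmk
    rw [Function.mem_support] at hmk
    have hd : ∀ i, ((2 * p : ℕ) : ℤ) ∣ (p : ℕ) * mk.1 i + (1 : ℕ) * mk.2 i := by
      by_contra hcon
      exact hmk (if_neg hcon)
    have hd' : ∀ i, ∃ k, mk.2 i = (p : ℤ) * k := by
      intro i
      have h1 : (p : ℤ) ∣ (p : ℕ) * mk.1 i + (1 : ℕ) * mk.2 i :=
        dvd_trans ⟨2, by push_cast; ring⟩ (hd i)
      have h2 := (dvd_add_right (dvd_mul_right (p : ℤ) (mk.1 i))).mp h1
      rw [Nat.cast_one, one_mul] at h2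
      exact h2
    choose k hk using hd'
    exact ⟨(mk.1, k), Prod.ext rfl (funext fun i => (hk i).symm)⟩
  rw [← hinj.tsum_eq hsupp, ← tsum_mul_left]
  · refine tsum_congr fun mk => ?_
    have hiff : (∀ i, ((2 * p : ℕ) : ℤ) ∣ (p : ℕ) * mk.1 i + (1 : ℕ) * ((p : ℤ) * mk.2 i)) ↔
        ∀ i, ((2 : ℕ) : ℤ) ∣ (1 : ℕ) * mk.1 i + (1 : ℕ) * mk.2 i := by
      refine forall_congr' fun i => ?_
      have hz : (p : ℤ) ≠ 0 := by exact_mod_cast hp0.ne'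
      have : ((p : ℕ) : ℤ) * mk.1 i + (1 : ℕ) * ((p : ℤ) * mk.2 i)
        = p * ((1 : ℕ) * mk.1 i + (1 : ℕ) * mk.2 i) := by push_cast; ring
      rw [this, Nat.cast_mul, mul_comm ((2 : ℕ) : ℤ), mul_dvd_mul_iff_left hz]
    simp only [hiff]
    split_ifs
    · rw [thetaTerm_scale g _ _ p hp0]
      push_cast
      rw [mul_pow, zpow_neg, zpow_natCast]
      field_simp
    · simp
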